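/- Assume the element setup and let D_h be the generalized Stokes–Dirac structure. Let ⋆_p : E_p → F_p and ⋆_q : E_q → F_q be linear maps such that the bilinear forms (e, ẽ) ↦ ⟨e | ⋆_p ẽ⟩_p on E_p and (e, ẽ) ↦ ⟨e | ⋆_q ẽ⟩_q on E_q are symmetric. Let β_p : ℝ → E_p and β_q : ℝ → E_q be differentiable functions, and let y_p, u_p : ℝ → B_p and y*, u* : ℝ → B_p* be functions such that for every t the tuple (−⋆_p β̇_p(t), −⋆_q β̇_q(t), y_p(t), y*(t), β_p(t), β_q(t), u*(t), u_p(t)) belongs to D_h, where β̇ denotes the time derivative. Then the discrete energy E_K(t) := ⟨β_p(t) | ⋆_p β_p(t)⟩_p + ⟨β_q(t) | ⋆_q β_q(t)⟩_q is differentiable and satisfies dE_K/dt (t) = 2 ( y*(t)(u_p(t)) + u*(t)(y_p(t)) ) for every t. -/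

import Mathlib

/-- The generalized Stokes-Dirac structure on a single element: the set of tuples
`((f_p, f_q, y_p, y*), (e_p, e_q, u*, u_p))` satisfying the defining relations. -/
def diracSet (p q : ℤ) {E_p F_p E_q F_q B_p B_q : Type*}
    [AddCommGroup E_p] [Module ℝ E_p] [AddCommGroup F_p] [Module ℝ F_p]
    [AddCommGroup E_q] [Module ℝ E_q] [AddCommGroup F_q] [Module ℝ F_q]
    [AddCommGroup B_p] [Module ℝ B_p] [AddCommGroup B_q] [Module ℝ B_q]
    (dpq : E_q →ₗ[ℝ] F_p) (dqp : E_p →ₗ[ℝ] F_q)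
    (trp : E_p →ₗ[ℝ] B_p) (trq : E_q →ₗ[ℝ] B_q)
    (Q : B_q →ₗ[ℝ] Module.Dual ℝ B_p)
    (T_p : Module.Dual ℝ B_p →ₗ[ℝ] F_p) (T_q : B_p →ₗ[ℝ] F_q) :
    Set ((F_p × F_q × B_p × Module.Dual ℝ B_p) ×
         (E_p × E_q × Module.Dual ℝ B_p × B_p)) :=
  {x | x.1.1 = ((-1 : ℝ) ^ (p * q + 1)) • dpq x.2.2.1
        + (((-1 : ℝ) ^ (p * q + 1 + q)) * (1 / 2)) • T_p (Q (trq x.2.2.1))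
        + ((-1 : ℝ) ^ (p * q + 1 + q)) • T_p x.2.2.2.1
    ∧ x.1.2.1 = dqp x.2.1 + (((-1 : ℝ) ^ p) * (1 / 2)) • T_q (trp x.2.1)
        + ((-1 : ℝ) ^ p) • T_q x.2.2.2.2
    ∧ x.1.2.2.2 = -(((-1 : ℝ) ^ p) • Q (trq x.2.2.1))
    ∧ x.1.2.2.1 = -(((-1 : ℝ) ^ p) • trp x.2.1)}

/-- The quadratic form of a symmetric bilinear form on a finite-dimensional space, evaluated along
a differentiable curve, has derivative `2 * B (γ t) γ'`. -/
theorem LinearMap.hasDerivAt_apply_self_of_symm {E : Type*} [NormedAddCommGroup E]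
    [NormedSpace ℝ E] [FiniteDimensional ℝ E] (B : E →ₗ[ℝ] E →ₗ[ℝ] ℝ)
    (hB : ∀ x y, B x y = B y x) {γ : ℝ → E} {γ' : E} {t : ℝ} (hγ : HasDerivAt γ γ' t) :
    HasDerivAt (fun s => B (γ s) (γ s)) (2 * B (γ t) γ') t := by
  have h := B.toContinuousBilinearMap.hasDerivAt_of_bilinear (fun _ => hγ) (fun _ => hγ)
  simp only [LinearMap.toContinuousBilinearMap_apply] at h
  exact h.congr_deriv (by rw [hB γ', two_mul])

/-- Power balance of the generalized Stokes-Dirac structure. -/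
theorem diracSet_power_balance
    {n p q : ℤ} (hpq : p + q = n + 1)
    {E_p F_p E_q F_q B_p B_q : Type*}
    [AddCommGroup E_p] [Module ℝ E_p] [AddCommGroup F_p] [Module ℝ F_p]
    [AddCommGroup E_q] [Module ℝ E_q] [AddCommGroup F_q] [Module ℝ F_q]
    [AddCommGroup B_p] [Module ℝ B_p] [AddCommGroup B_q] [Module ℝ B_q]
    {pairP : E_p →ₗ[ℝ] F_p →ₗ[ℝ] ℝ} {pairQ : E_q →ₗ[ℝ] F_q →ₗ[ℝ] ℝ}
    {dpq : E_q →ₗ[ℝ] F_p} {dqp : E_p →ₗ[ℝ] F_q}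
    {trp : E_p →ₗ[ℝ] B_p} {trq : E_q →ₗ[ℝ] B_q}
    {Q : B_q →ₗ[ℝ] Module.Dual ℝ B_p}
    (hibp : ∀ (w : E_q) (v : E_p),
      (-1 : ℝ) ^ (p * (n - p)) * pairP v (dpq w)
        = (-1 : ℝ) ^ p * pairQ w (dqp v) + Q (trq w) (trp v))
    {T_p : Module.Dual ℝ B_p →ₗ[ℝ] F_p}
    (hTp : ∀ (v : E_p) (l : Module.Dual ℝ B_p),
      pairP v (T_p l) = (-1 : ℝ) ^ ((p - 1) * (q - 1)) * l (trp v))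
    {T_q : B_p →ₗ[ℝ] F_q}
    (hTq : ∀ (w : E_q) (u : B_p), pairQ w (T_q u) = Q (trq w) u)
    {f_p : F_p} {f_q : F_q} {y_p u_p : B_p} {ystar ustar : Module.Dual ℝ B_p}
    {e_p : E_p} {e_q : E_q}
    (h : ((f_p, f_q, y_p, ystar), (e_p, e_q, ustar, u_p)) ∈
      diracSet p q dpq dqp trp trq Q T_p T_q) :
    pairP e_p f_p + pairQ e_q f_q + ystar u_p + ustar y_p = 0 := by
  obtain ⟨hfp, hfq, hys, hyp⟩ := h
  dsimp only at hfp hfq hys hyp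
  have hn : n - p = q - 1 := by lia
  have hI := hibp e_q e_p
  rw [hn] at hI
  subst hfp hfq hys hyp
  simp only [map_add, map_neg, map_smul, smul_eq_mul, hTp, hTq, LinearMap.neg_apply,
    LinearMap.smul_apply]
  have hsplit (a b : ℤ) : (-1 : ℝ) ^ (a + b) = (-1) ^ a * (-1) ^ b :=
    zpow_add₀ (by norm_num) a b
  have hsq (a : ℤ) : (-1 : ℝ) ^ a * (-1) ^ a = 1 := by
    rw [← mul_zpow]; norm_num
  have hneg (a : ℤ) : (-1 : ℝ) ^ (-a) = (-1) ^ a := by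
    rw [zpow_neg, ← inv_zpow]; norm_num
  have hp := hsq p
  have hq := hsq q
  have hr := hsq (p * q)
  rw [show p * (q - 1) = p * q + -p by ring, hsplit, hneg] at hI
  rw [show (p - 1) * (q - 1) = p * q + -p + -q + 1 by ring]
  simp only [hsplit, hneg, zpow_one]
  generalize (-1 : ℝ) ^ p = a at *
  generalize (-1 : ℝ) ^ q = b at *
  generalize (-1 : ℝ) ^ (p * q) = c at *
  grind

/-- Energy conservation on an element: if `(−⋆_p β̇_p, −⋆_q β̇_q, y_p, y*, β_p, β_q,
u*, u_p)` belongs to the generalized Stokes-Dirac structure for every time `t`, and the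
bilinear forms induced by the discrete Hodge stars are symmetric, then the discrete
energy `E_K(t) = ⟨β_p|⋆_p β_p⟩_p + ⟨β_q|⋆_q β_q⟩_q` is differentiable with
`dE_K/dt = 2 (y*(u_p) + u*(y_p))`. -/
theorem element_energy_conservation
    (n p q : ℤ) (hpq : p + q = n + 1)
    {E_p F_p E_q F_q B_p B_q : Type*}
    [NormedAddCommGroup E_p] [NormedSpace ℝ E_p] [FiniteDimensional ℝ E_p]
    [AddCommGroup F_p] [Module ℝ F_p] [FiniteDimensional ℝ F_p]
    [NormedAddCommGroup E_q] [NormedSpace ℝ E_q] [FiniteDimensional ℝ E_q]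
    [AddCommGroup F_q] [Module ℝ F_q] [FiniteDimensional ℝ F_q]
    [AddCommGroup B_p] [Module ℝ B_p] [FiniteDimensional ℝ B_p]
    [AddCommGroup B_q] [Module ℝ B_q] [FiniteDimensional ℝ B_q]
    (pairP : E_p →ₗ[ℝ] F_p →ₗ[ℝ] ℝ)
    (hP₁ : ∀ e : E_p, (∀ f : F_p, pairP e f = 0) → e = 0)
    (hP₂ : ∀ f : F_p, (∀ e : E_p, pairP e f = 0) → f = 0)
    (pairQ : E_q →ₗ[ℝ] F_q →ₗ[ℝ] ℝ)
    (hQ₁ : ∀ e : E_q, (∀ f : F_q, pairQ e f = 0) → e = 0)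
    (hQ₂ : ∀ f : F_q, (∀ e : E_q, pairQ e f = 0) → f = 0)
    (dpq : E_q →ₗ[ℝ] F_p) (dqp : E_p →ₗ[ℝ] F_q)
    (trp : E_p →ₗ[ℝ] B_p) (trq : E_q →ₗ[ℝ] B_q)
    (Q : B_q →ₗ[ℝ] Module.Dual ℝ B_p)
    (hibp : ∀ (w : E_q) (v : E_p),
      (-1 : ℝ) ^ (p * (n - p)) * pairP v (dpq w)
        = (-1 : ℝ) ^ p * pairQ w (dqp v) + Q (trq w) (trp v))
    (T_p : Module.Dual ℝ B_p →ₗ[ℝ] F_p)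
    (hTp : ∀ (v : E_p) (l : Module.Dual ℝ B_p),
      pairP v (T_p l) = (-1 : ℝ) ^ ((p - 1) * (q - 1)) * l (trp v))
    (T_q : B_p →ₗ[ℝ] F_q)
    (hTq : ∀ (w : E_q) (u : B_p), pairQ w (T_q u) = Q (trq w) u)
    (starP : E_p →ₗ[ℝ] F_p) (starQ : E_q →ₗ[ℝ] F_q)
    (hsymP : ∀ e e' : E_p, pairP e (starP e') = pairP e' (starP e))
    (hsymQ : ∀ e e' : E_q, pairQ e (starQ e') = pairQ e' (starQ e))
    (βp : ℝ → E_p) (βq : ℝ → E_q)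
    (hβp : Differentiable ℝ βp) (hβq : Differentiable ℝ βq)
    (y_p u_p : ℝ → B_p) (ystar ustar : ℝ → Module.Dual ℝ B_p)
    (hmem : ∀ t : ℝ,
      ((-(starP (deriv βp t)), -(starQ (deriv βq t)), y_p t, ystar t),
        (βp t, βq t, ustar t, u_p t)) ∈ diracSet p q dpq dqp trp trq Q T_p T_q) :
    ∀ t : ℝ,
      HasDerivAt
        (fun s => pairP (βp s) (starP (βp s)) + pairQ (βq s) (starQ (βq s)))
        (2 * (ystar t (u_p t) + ustar t (y_p t))) t := by
  intro t
  have hp := (pairP.compl₂ starP).hasDerivAt_apply_self_of_symm hsymP (hβp t).hasDerivAt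
  have hq := (pairQ.compl₂ starQ).hasDerivAt_apply_self_of_symm hsymQ (hβq t).hasDerivAt
  have hbal := diracSet_power_balance hpq hibp hTp hTq (hmem t)
  simp only [LinearMap.compl₂_apply] at hp hq
  simp only [map_neg] at hbal
  exact (hp.add hq).congr_deriv (by linarith)
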